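/- Let G be a graph on n vertices, k ≥ 5 an integer, and let v_1 v_2 ⋯ v_k be an induced cycle of length k in G. For j = 1, ..., k, let D_j be the good k-tuple (v_j, v_{j−1}, v_{j+1}, v_{j+2}, ..., v_{j+k−2}), indices modulo k. Then ( ∏_{j=1}^{k} w(D_j) )^{1/k} ≥ k^{k−1}/(4 n^k). -/

import Mathlib

open Finset
open scoped Classical

/-- Index transposition swapping 0 and 1. -/
def swap01 (i : ℕ) : ℕ := if i = 0 then 1 else if i = 1 then 0 else i

/-- `y 0, y 1, …, y (k-1)` is an induced cycle of length `k` in `G`. -/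
def IsInducedCycle {V : Type*} (G : SimpleGraph V) (k : ℕ) (y : ℕ → V) : Prop :=
  (∀ i < k, ∀ j < k, y i = y j → i = j) ∧
  ∀ i < k, ∀ j < k, (G.Adj (y i) (y j) ↔ (i + 1) % k = j ∨ (j + 1) % k = i)

/-- `y 0, y 1, …, y (m-1)` is an induced path on `m` vertices in `G`. -/
def IsInducedPath {V : Type*} (G : SimpleGraph V) (m : ℕ) (y : ℕ → V) : Prop :=
  (∀ i < m, ∀ j < m, y i = y j → i = j) ∧
  ∀ i < m, ∀ j < m, (G.Adj (y i) (y j) ↔ i + 1 = j ∨ j + 1 = i)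

/-- `(z 0, …, z (k-1))` is a good k-tuple: `z 1, z 0, z 2, …, z (k-1)` is an induced cycle. -/
def IsGoodTuple {V : Type*} (G : SimpleGraph V) (k : ℕ) (z : ℕ → V) : Prop :=
  IsInducedCycle G k (fun i => z (swap01 i))

/-- The sequence `z 1, z 0, z 2, …, z (i-2), x` of length `i`. -/
def extSeq {V : Type*} (z : ℕ → V) (i : ℕ) (x : V) : ℕ → V :=
  fun p => if p = i - 1 then x else z (swap01 p)

/-- The quantity `n_i` associated with the (prefix of the) tuple `z`. -/
noncomputable def nq {V : Type*} (G : SimpleGraph V) (k : ℕ) (z : ℕ → V) (i : ℕ) : ℕ :=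
  if i = 1 then Nat.card V
  else if i = 2 then Nat.card {x : V // G.Adj (z 0) x}
  else if i = 3 then Nat.card {x : V // G.Adj (z 0) x ∧ ¬ G.Adj (z 1) x}
  else if i < k then Nat.card {x : V // IsInducedPath G i (extSeq z i x)}
  else Nat.card {x : V // IsInducedCycle G k (extSeq z k x)}

/-- The weight `w(D) = ∏_{i=1}^k 1/n_i` of a tuple. -/
noncomputable def wt {V : Type*} (G : SimpleGraph V) (k : ℕ) (z : ℕ → V) : ℝ :=
  ∏ i ∈ Finset.Icc 1 k, ((nq G k z i : ℝ))⁻¹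

/-- View a `Fin k`-tuple as an `ℕ`-indexed tuple. -/
def tupFun {V : Type*} {k : ℕ} (hk : 0 < k) (z : Fin k → V) : ℕ → V :=
  fun i => z ⟨i % k, Nat.mod_lt i hk⟩

/-- The good tuple `D_j = (v_j, v_{j-1}, v_{j+1}, …, v_{j+k-2})` (0-indexed `j`, indices mod `k`). -/
def Dtup {V : Type*} (k : ℕ) (v : ℕ → V) (j : ℕ) : ℕ → V :=
  fun p => if p = 0 then v (j % k)
    else if p = 1 then v ((j + k - 1) % k)
    else v ((j + p - 1) % k)

def Epred {V : Type*} (G : SimpleGraph V) (k : ℕ) (z : ℕ → V) (i : ℕ) (x : V) : Prop :=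
  if i = 2 then G.Adj (z 0) x
  else if i = 3 then G.Adj (z 0) x ∧ ¬ G.Adj (z 1) x
  else if i < k then IsInducedPath G i (extSeq z i x)
  else IsInducedCycle G k (extSeq z k x)

lemma nq_eq {V : Type*} (G : SimpleGraph V) (k : ℕ) (z : ℕ → V) (i : ℕ) (hi : 2 ≤ i) :
    nq G k z i = Nat.card {x : V // Epred G k z i x} := by
  unfold nq Epred
  have : i ≠ 1 := by omega
  split_ifs <;> first | rfl | omega

lemma Dtup_swap {V : Type*} (k : ℕ) (hk : 5 ≤ k) (v : ℕ → V) (j p : ℕ) :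
    Dtup k v j (swap01 p) = v ((j + k - 1 + p) % k) := by
  unfold Dtup swap01
  by_cases h0 : p = 0
  · subst h0; simp
  by_cases h1 : p = 1
  · subst h1
    have : j + k - 1 + 1 = j + k := by omega
    simp [this]
  · simp only [h0, h1, if_false]
    have : j + k - 1 + p = (j + p - 1) + k := by omega
    rw [this, Nat.add_mod_right]

lemma Dtup_mod {V : Type*} (k : ℕ) (hk : 5 ≤ k) (v : ℕ → V) (j : ℕ) :
    Dtup k v (j % k) = Dtup k v j := by
  funext p
  have hs : swap01 (swap01 p) = p := by unfold swap01; by_cases h0 : p = 0 <;> by_cases h1 : p = 1 <;> simp_all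
  rw [← hs, Dtup_swap k hk, Dtup_swap k hk]
  have h1 : j % k + k - 1 + swap01 p = j % k + (k - 1 + swap01 p) := by
    rw [Nat.add_sub_assoc (by omega), add_assoc]
  have h2 : j + k - 1 + swap01 p = j + (k - 1 + swap01 p) := by omega
  rw [h1, h2, Nat.mod_add_mod]

lemma rot_cycle {V : Type*} {G : SimpleGraph V} {k : ℕ} (hk : 5 ≤ k) {v : ℕ → V}
    (hv : IsInducedCycle G k v) (m : ℕ) : IsInducedCycle G k (fun p => v ((m + p) % k)) := by
  have hm : ∀ p, (m + p) % k < k := fun p => Nat.mod_lt _ (by omega)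
  have inj : ∀ a < k, ∀ b < k, (m + a) % k = (m + b) % k → a = b := by
    intro a ha b hb h
    have h' : a ≡ b [MOD k] := Nat.ModEq.add_left_cancel' m h
    exact Nat.ModEq.eq_of_lt_of_lt h' ha hb
  have key : ∀ a < k, ∀ b < k, (((m + a) % k + 1) % k = (m + b) % k ↔ (a + 1) % k = b) := by
    intro a ha b hb
    have : ((m + a) % k + 1) % k = (m + (a + 1) % k) % k := by
      rw [Nat.mod_add_mod, Nat.add_mod_mod, add_assoc]
    rw [this]
    constructor
    · exact inj _ (Nat.mod_lt _ (by omega)) _ hb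
    · intro h; rw [h]
  refine ⟨fun a ha b hb h => inj a ha b hb (hv.1 _ (hm a) _ (hm b) h), fun a ha b hb => ?_⟩
  show G.Adj (v _) (v _) ↔ _
  rw [hv.2 _ (hm a) _ (hm b), key a ha b hb, key b hb a ha]

lemma D_cycle {V : Type*} {G : SimpleGraph V} {k : ℕ} (hk : 5 ≤ k) {v : ℕ → V}
    (hv : IsInducedCycle G k v) (j : ℕ) :
    IsInducedCycle G k (fun p => Dtup k v j (swap01 p)) := by
  have := rot_cycle hk hv (j + k - 1)
  simpa only [Dtup_swap k hk] using this

lemma E_exists {V : Type*} {G : SimpleGraph V} {k : ℕ} (hk : 5 ≤ k) {z : ℕ → V}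
    (hz : IsInducedCycle G k (fun p => z (swap01 p))) (i : ℕ) (hi : 2 ≤ i) (hik : i ≤ k) :
    ∃ x, Epred G k z i x := by
  have ext : ∀ i, 3 ≤ i → extSeq z i (z (i-1)) = fun p => z (swap01 p) := by
    intro i hi
    funext p
    unfold extSeq
    split_ifs with h
    · subst h
      congr 1
      unfold swap01
      split_ifs <;> omega
    · rfl
  have h1 := (hz.2 1 (by omega) 2 (by omega))
  have h2 := (hz.2 0 (by omega) 2 (by omega))
  simp only [swap01, if_true, one_ne_zero, if_false, two_ne_zero, OfNat.ofNat_ne_one] at h1 h2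
  have e1 : (1 + 1) % k = 2 := Nat.mod_eq_of_lt (by omega)
  have e2 : (0 + 1) % k = 1 := Nat.mod_eq_of_lt (by omega)
  have e3 : (2 + 1) % k = 3 := Nat.mod_eq_of_lt (by omega)
  rw [e1, e3] at h1
  rw [e2, e3] at h2
  have a1 : G.Adj (z 0) (z 2) := h1.2 (by simp)
  have a2 : ¬ G.Adj (z 1) (z 2) := fun h => by simpa using h2.1 h
  by_cases c2 : i = 2
  · exact ⟨z 2, by simpa [Epred, c2] using a1⟩
  by_cases c3 : i = 3
  · exact ⟨z 2, by simpa [Epred, c3] using ⟨a1, a2⟩⟩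
  refine ⟨z (i-1), ?_⟩
  unfold Epred
  rw [if_neg c2, if_neg c3]
  split_ifs with c4
  · rw [ext i (by omega)]
    refine ⟨fun a ha b hb h => hz.1 a (by omega) b (by omega) h, fun a ha b hb => ?_⟩
    rw [hz.2 a (by omega) b (by omega), Nat.mod_eq_of_lt (by omega), Nat.mod_eq_of_lt (by omega)]
  · have : i = k := by omega
    subst this
    rw [ext i (by omega)]
    exact hz

lemma E_imp {V : Type*} {G : SimpleGraph V} {k : ℕ} (hk : 5 ≤ k) {v : ℕ → V}
    (j i : ℕ) (hi : 4 ≤ i) (hik : i ≤ k) (x : V) (h : Epred G k (Dtup k v j) i x) :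
    G.Adj (v ((j + (i - 3)) % k)) x ∧ (∀ t < i - 3, ¬ G.Adj (v ((j + t) % k)) x) ∧
    (i < k → ¬ G.Adj (v ((j + k - 1) % k)) x) ∧ (i = k → G.Adj (v ((j + k - 1) % k)) x) := by
  have e0 : extSeq (Dtup k v j) i x (i-1) = x := by simp [extSeq]
  have e1 : ∀ p < i - 1, extSeq (Dtup k v j) i x p = v ((j + k - 1 + p) % k) := by
    intro p hp
    unfold extSeq
    rw [if_neg (by omega), Dtup_swap k hk]
  have e2 : ∀ t, t + 1 < i - 1 → extSeq (Dtup k v j) i x (t+1) = v ((j + t) % k) := by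
    intro t ht
    rw [e1 _ ht]
    have : j + k - 1 + (t + 1) = j + t + k := by omega
    rw [this, Nat.add_mod_right]
  have e3 := e1 0 (by omega)
  rw [add_zero] at e3
  unfold Epred at h
  rw [if_neg (by omega), if_neg (by omega)] at h
  split_ifs at h with c
  · refine ⟨?_, ?_, ?_, by omega⟩
    · have := h.2 (i - 3 + 1) (by omega) (i-1) (by omega)
      rw [e0, e2 _ (by omega)] at this
      exact this.2 (by omega)
    · intro t ht ha
      have := h.2 (t + 1) (by omega) (i-1) (by omega)
      rw [e0, e2 _ (by omega)] at this
      have := this.1 ha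
      omega
    · intro _ ha
      have := h.2 0 (by omega) (i-1) (by omega)
      rw [e0, e3] at this
      have := this.1 ha
      omega
  · have : i = k := by omega
    subst this
    have hm : (i - 1 + 1) % i = 0 := by rw [Nat.sub_add_cancel (by omega), Nat.mod_self]
    refine ⟨?_, ?_, by omega, ?_⟩
    · have := h.2 (i - 3 + 1) (by omega) (i-1) (by omega)
      rw [e0, e2 _ (by omega)] at this
      refine this.2 (Or.inl ?_)
      rw [Nat.mod_eq_of_lt (by omega)]; omega
    · intro t ht ha
      have := h.2 (t + 1) (by omega) (i-1) (by omega)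
      rw [e0, e2 _ (by omega), hm, Nat.mod_eq_of_lt (show t + 1 + 1 < i by omega)] at this
      have := this.1 ha
      omega
    · intro _
      have := h.2 0 (by omega) (i-1) (by omega)
      rw [e0, e3] at this
      exact this.2 (Or.inr hm)

/-- Purely combinatorial counting lemma. -/
lemma count_bound (k : ℕ) (hk : 5 ≤ k) (P : ℕ → Prop) (E : ℕ → ℕ → Prop)
    (hP : ∀ m, P (m % k) ↔ P m) (hE : ∀ j i, E (j % k) i ↔ E j i)
    (h2 : ∀ j, E j 2 → P j) (h3 : ∀ j, E j 3 → P j ∧ ¬ P (j + k - 1))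
    (h4 : ∀ j i, 4 ≤ i → i ≤ k → E j i → P (j + (i - 3)) ∧ (∀ t < i - 3, ¬ P (j + t)) ∧
      (i < k → ¬ P (j + k - 1)) ∧ (i = k → P (j + k - 1))) :
    ∑ j ∈ range k, ∑ i ∈ Icc 2 k, (if E j i then (if i ≤ 3 then 1 else 2) else 0) ≤ 2 * (k - 1) := by
  set c : ℕ → ℕ := fun j => ∑ i ∈ Icc 2 k, (if E j i then (if i ≤ 3 then 1 else 2) else 0) with hc
  have cmod : ∀ j, c (j % k) = c j := by
    intro j; simp only [hc, hE]
  have ceq : ∀ j, c j = (if E j 2 then 1 else 0) + (if E j 3 then 1 else 0)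
      + 2 * #{i ∈ Icc 4 k | E j i} := by
    intro j
    have : Icc 2 k = insert 2 (insert 3 (Icc 4 k)) := by
      ext a; simp only [mem_insert, mem_Icc]; omega
    simp only [hc]
    rw [this, sum_insert (by simp), sum_insert (by simp), ← add_assoc]
    congr 1
    rw [card_filter, mul_sum]
    refine sum_congr rfl fun i hi => ?_
    rw [mem_Icc] at hi
    have : ¬ i ≤ 3 := by omega
    simp [this]
  have card1 : ∀ j, #{i ∈ Icc 4 k | E j i} ≤ 1 := by
    intro j
    rw [card_le_one]
    intro a ha b hb
    simp only [mem_filter, mem_Icc] at ha hb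
    have A := h4 j a ha.1.1 ha.1.2 ha.2
    have B := h4 j b hb.1.1 hb.1.2 hb.2
    rcases lt_trichotomy a b with h | h | h
    · exact absurd A.1 (B.2.1 _ (by omega))
    · exact h
    · exact absurd B.1 (A.2.1 _ (by omega))
  have card0 : ∀ j, (∀ i, 4 ≤ i → i ≤ k → ¬ E j i) → #{i ∈ Icc 4 k | E j i} = 0 := by
    intro j h
    rw [card_eq_zero, filter_eq_empty_iff]
    intro i hi
    rw [mem_Icc] at hi
    exact h i hi.1 hi.2
  have cP : ∀ j, P j → #{i ∈ Icc 4 k | E j i} = 0 := by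
    intro j hj
    refine card0 j fun i hi hik h => ?_
    exact (h4 j i hi hik h).2.1 0 (by omega) (by simpa using hj)
  have fa : ∀ j, c j ≤ 2 := by
    intro j
    rw [ceq]
    by_cases hj : P j
    · rw [cP j hj]; split_ifs <;> omega
    · rw [if_neg (fun h => hj (h2 j h)), if_neg (fun h => hj (h3 j h).1)]
      have := card1 j
      omega
  have fb : ∀ j, P (j + k - 1) → P j → c j ≤ 1 := by
    intro j h h'
    rw [ceq, cP j h', if_neg (fun hh => (h3 j hh).2 h)]
    split_ifs <;> omega
  have fc : ∀ j, P (j + k - 1) → ¬ P j → c j ≠ 0 → E j k := by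
    intro j h hj h0
    by_contra hE
    apply h0
    rw [ceq, if_neg (fun h => hj (h2 j h)), if_neg (fun h => hj (h3 j h).1), card0]
    intro i hi hik hEi
    rcases hik.lt_or_eq with hl | rfl
    · exact (h4 j i hi hik hEi).2.2.1 hl h
    · exact hE hEi
  have one : ∀ j, c j = 0 → ∑ j ∈ range k, c j ≤ 2 * (k - 1) := by
    intro j hj
    have hm : j % k ∈ range k := mem_range.2 (Nat.mod_lt _ (by omega))
    rw [← add_sum_erase _ _ hm, cmod, hj, zero_add]
    refine (sum_le_card_nsmul _ _ 2 fun x _ => fa x).trans ?_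
    rw [card_erase_of_mem hm, card_range, smul_eq_mul, mul_comm]
  have two : ∀ j, c j ≤ 1 → c (j+1) ≤ 1 → ∑ j ∈ range k, c j ≤ 2 * (k - 1) := by
    intro j hj hj'
    have hm : j % k ∈ range k := mem_range.2 (Nat.mod_lt _ (by omega))
    have hm' : (j+1) % k ∈ (range k).erase (j % k) := by
      rw [mem_erase]
      refine ⟨fun h => ?_, mem_range.2 (Nat.mod_lt _ (by omega))⟩
      have h' : 1 ≡ 0 [MOD k] := Nat.ModEq.add_left_cancel' j h
      have := Nat.ModEq.eq_of_lt_of_lt h' (by omega) (by omega)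
      omega
    rw [← add_sum_erase _ _ hm, ← add_sum_erase _ _ hm', cmod, cmod]
    have := sum_le_card_nsmul (((range k).erase (j % k)).erase ((j+1) % k)) c 2 (fun x _ => fa x)
    rw [card_erase_of_mem hm', card_erase_of_mem hm, card_range, smul_eq_mul] at this
    change _ + (_ + ∑ x ∈ ((range k).erase (j % k)).erase ((j + 1) % k), c x) ≤ _
    change ∑ x ∈ ((range k).erase (j % k)).erase ((j + 1) % k), c x ≤ _ at this
    omega
  show ∑ j ∈ range k, c j ≤ _
  have Pk : ∀ m, P (m + k) ↔ P m := by
    intro m; rw [← hP, Nat.add_mod_right, hP]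
  by_cases hall : ∀ j, P j
  · exact two 0 (fb _ (hall _) (hall _)) (fb _ (hall _) (hall _))
  by_cases hne : ∀ j, ¬ P j
  · refine one 0 ?_
    rw [ceq, if_neg (fun h => hne _ (h2 _ h)), if_neg (fun h => hne _ (h3 _ h).1), card0]
    intro i hi hik h
    exact hne _ (h4 _ i hi hik h).1
  -- a descent
  have : ∃ m, P m ∧ ¬ P (m + 1) := by
    by_contra hcon
    push Not at hcon hall hne
    obtain ⟨a, ha⟩ := hne
    obtain ⟨b, hb⟩ := hall
    have up : ∀ t, P (a + t) := by
      intro t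
      induction t with
      | zero => exact ha
      | succ t ih => exact hcon _ ih
    have down : ∀ t, ¬ P (b + t * k) := by
      intro t
      induction t with
      | zero => simpa using hb
      | succ t ih =>
        rw [add_mul, one_mul, ← add_assoc, Pk]; exact ih
    have : a ≤ a * k := Nat.le_mul_of_pos_right _ (by omega)
    apply down a
    have h := up (b + a * k - a)
    rwa [show a + (b + a * k - a) = b + a * k by omega] at h
  obtain ⟨m, hm, hm'⟩ := this
  have hmk : P (m + 1 + k - 1) := by
    rw [show m + 1 + k - 1 = m + k by omega, Pk]; exact hm
  by_cases hc0 : c (m+1) = 0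
  · exact one _ hc0
  have hEk := fc _ hmk hm' hc0
  obtain ⟨q1, q2, -, -⟩ := h4 _ k (by omega) le_rfl hEk
  -- set a = m + 1 + (k-3)
  set a := m + 1 + (k - 3) with ha
  have hPa1 : P (a + 1 + k - 1) := by
    rw [show a + 1 + k - 1 = a + k by omega, Pk]; exact q1
  have hPa2 : P (a + 2) := by
    rw [show a + 2 = m + k by omega, Pk]; exact hm
  by_cases hq : P (a + 1)
  · refine two (a+1) (fb _ hPa1 hq) (fb _ ?_ hPa2)
    rw [show a + 1 + 1 + k - 1 = a + 1 + k by omega, Pk]; exact hq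
  · refine one (a+1) ?_
    by_contra h0
    have := fc _ hPa1 hq h0
    exact (h4 _ k (by omega) le_rfl this).2.1 1 (by omega) hPa2

lemma sum_bound {V : Type} [Fintype V] (G : SimpleGraph V) (k : ℕ)
    (hk : 5 ≤ k) (v : ℕ → V) :
    ∑ j ∈ range k, ∑ i ∈ Icc 2 k, (if i ≤ 3 then 1 else 2) * nq G k (Dtup k v j) i
      ≤ 2 * (k - 1) * Fintype.card V := by
  have h1 : ∀ j, ∀ i ∈ Icc 2 k, (if i ≤ 3 then 1 else 2) * nq G k (Dtup k v j) i
      = ∑ x : V, (if Epred G k (Dtup k v j) i x then (if i ≤ 3 then 1 else 2) else 0) := by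
    intro j i hi
    rw [nq_eq _ _ _ _ (mem_Icc.1 hi).1, Nat.card_eq_fintype_card, Fintype.card_subtype,
      ← sum_filter, sum_const, smul_eq_mul, mul_comm]
  rw [sum_congr rfl fun j _ => sum_congr rfl (h1 j)]
  rw [sum_congr rfl fun j _ => sum_comm, sum_comm]
  refine (sum_le_card_nsmul _ _ (2 * (k-1)) ?_).trans ?_
  · intro x _
    refine count_bound k hk (fun m => G.Adj (v (m % k)) x)
      (fun j i => Epred G k (Dtup k v j) i x) ?_ ?_ ?_ ?_ ?_
    · intro m; simp
    · intro j i; simp only [Dtup_mod k hk]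
    · intro j h; simpa [Epred, Dtup] using h
    · intro j h; simpa [Epred, Dtup] using h
    · intro j i hi hik h
      exact E_imp hk j i hi hik x h
  · rw [smul_eq_mul, card_univ, mul_comm]

lemma amgm {ι : Type*} (s : Finset ι) (hs : s.Nonempty) (f : ι → ℝ) (hf : ∀ i ∈ s, 0 ≤ f i)
    (C : ℝ) (hC : ∑ i ∈ s, f i ≤ #s * C) : ∏ i ∈ s, f i ≤ C ^ #s := by
  have hc : (0:ℝ) < #s := by exact_mod_cast hs.card_pos
  have h := Real.geom_mean_le_arith_mean s (fun _ => (1:ℝ)) f (fun _ _ => zero_le_one)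
    (by simpa using hs) hf
  simp only [Real.rpow_one, sum_const, nsmul_eq_mul, mul_one, one_mul] at h
  have h' : (∏ i ∈ s, f i) ^ ((#s:ℝ)⁻¹) ≤ C := h.trans (by rw [div_le_iff₀ hc]; linarith)
  have hp := prod_nonneg hf
  calc ∏ i ∈ s, f i = ((∏ i ∈ s, f i) ^ ((#s:ℝ)⁻¹)) ^ #s :=
        (Real.rpow_inv_natCast_pow hp hs.card_pos.ne').symm
    _ ≤ C ^ #s := pow_le_pow_left₀ (Real.rpow_nonneg hp _) h' _

lemma prod_bound {V : Type} [Fintype V] (G : SimpleGraph V) (k : ℕ)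
    (hk : 5 ≤ k) (v : ℕ → V) :
    ∏ j ∈ range k, ∏ i ∈ Icc 2 k, (nq G k (Dtup k v j) i : ℝ)
      ≤ (4 * ((Fintype.card V : ℝ) / k) ^ (k - 1)) ^ k := by
  have hk0 : (0:ℝ) < k := by positivity
  have hS := sum_bound G k hk v
  have hcard : #(range k ×ˢ Icc 2 k) = k * (k - 1) := by
    rw [card_product, card_range, Nat.card_Icc]; congr 1
  have h := amgm (range k ×ˢ Icc 2 k)
    (card_pos.1 (by rw [hcard]; exact Nat.mul_pos (by omega) (by omega)))
    (fun p => (if p.2 ≤ 3 then (1:ℝ) else 2) * nq G k (Dtup k v p.1) p.2)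
    (fun p _ => mul_nonneg (by split_ifs <;> norm_num) (Nat.cast_nonneg _))
    (2 * (Fintype.card V / k)) (by
      rw [sum_product, hcard]
      have : ((∑ j ∈ range k, ∑ i ∈ Icc 2 k, (if i ≤ 3 then 1 else 2) * nq G k (Dtup k v j) i : ℕ) : ℝ)
        ≤ ((2 * (k - 1) * Fintype.card V : ℕ) : ℝ) := by exact_mod_cast hS
      push_cast at this ⊢
      refine this.trans (le_of_eq ?_)
      field_simp)
  rw [hcard, prod_product] at h
  simp only [prod_mul_distrib] at h
  have hb : ∏ i ∈ Icc 2 k, (if i ≤ 3 then (1:ℝ) else 2) = 2 ^ (k - 3) := by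
    have : Icc 2 k = insert 2 (insert 3 (Icc 4 k)) := by
      ext a; simp only [mem_insert, mem_Icc]; omega
    rw [this, prod_insert (by simp), prod_insert (by simp)]
    rw [prod_congr rfl (g := fun _ => (2:ℝ))]
    · rw [prod_const, Nat.card_Icc]
      rw [show k + 1 - 4 = k - 3 by omega]
      norm_num
    · intro i hi
      rw [mem_Icc] at hi
      rw [if_neg (by omega)]
  have hb2 : (∏ x ∈ range k, ∏ i ∈ Icc 2 k, (if i ≤ 3 then (1:ℝ) else 2)) = (2 ^ (k - 3)) ^ k := by
    rw [hb, prod_const, card_range]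
  have h : (2 ^ (k - 3)) ^ k * ∏ j ∈ range k, ∏ i ∈ Icc 2 k, (nq G k (Dtup k v j) i : ℝ)
      ≤ (2 * ((Fintype.card V : ℝ) / k)) ^ (k * (k-1)) := by
    rw [← hb2]
    convert h
  have e : (2 * ((Fintype.card V : ℝ) / k)) ^ (k * (k-1))
      = (2 ^ (k-3)) ^ k * (4 * ((Fintype.card V : ℝ) / k) ^ (k - 1)) ^ k := by
    rw [mul_comm k, pow_mul, ← mul_pow]
    congr 1
    rw [mul_pow, ← mul_assoc]
    congr 1
    rw [show k - 1 = (k - 3) + 2 by omega, pow_add]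
    norm_num
  rw [e] at h
  exact le_of_mul_le_mul_left h (by positivity)

theorem geom_mean_weights_ge {V : Type} [Fintype V] (G : SimpleGraph V) (n k : ℕ)
    (hn : Fintype.card V = n) (hk : 5 ≤ k) (v : ℕ → V) (hv : IsInducedCycle G k v) :
    (k : ℝ) ^ (k - 1) / (4 * (n : ℝ) ^ k)
      ≤ (∏ j ∈ Finset.range k, wt G k (Dtup k v j)) ^ ((1 : ℝ) / k) := by
  have hn0 : (0:ℝ) < n := by
    have : 0 < Fintype.card V := Fintype.card_pos_iff.2 ⟨v 0⟩
    rw [← hn]; exact_mod_cast this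
  have hk0 : (0:ℝ) < k := by positivity
  have hb := prod_bound G k hk v
  rw [hn] at hb
  have hw : ∏ j ∈ range k, wt G k (Dtup k v j)
      = ((n:ℝ) ^ k * ∏ j ∈ range k, ∏ i ∈ Icc 2 k, (nq G k (Dtup k v j) i : ℝ))⁻¹ := by
    have : ∀ j, wt G k (Dtup k v j)
        = ((n:ℝ) * ∏ i ∈ Icc 2 k, (nq G k (Dtup k v j) i : ℝ))⁻¹ := by
      intro j
      have hI : Icc 1 k = insert 1 (Icc 2 k) := by
        ext a; simp only [mem_insert, mem_Icc]; omega
      unfold wt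
      rw [prod_inv_distrib, hI, prod_insert (by simp)]
      congr 2
      simp [nq, hn]
    simp only [this]
    rw [prod_inv_distrib, prod_mul_distrib, prod_const, card_range]
  have hpos : 0 < ∏ j ∈ range k, ∏ i ∈ Icc 2 k, (nq G k (Dtup k v j) i : ℝ) := by
    refine prod_pos fun j _ => prod_pos fun i hi => ?_
    rw [mem_Icc] at hi
    rw [nq_eq _ _ _ _ hi.1]
    obtain ⟨x, hx⟩ := E_exists hk (D_cycle hk hv j) i hi.1 hi.2
    have : Nonempty {x : V // Epred G k (Dtup k v j) i x} := ⟨⟨x, hx⟩⟩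
    exact_mod_cast Nat.card_pos
  have hL : 0 ≤ (k : ℝ) ^ (k - 1) / (4 * (n : ℝ) ^ k) := by positivity
  have hLk : ((k : ℝ) ^ (k - 1) / (4 * (n : ℝ) ^ k)) ^ k
      ≤ ∏ j ∈ range k, wt G k (Dtup k v j) := by
    rw [hw]
    have e : ((k : ℝ) ^ (k - 1) / (4 * (n : ℝ) ^ k)) ^ k
        = ((n:ℝ) ^ k * (4 * ((n : ℝ) / k) ^ (k - 1)) ^ k)⁻¹ := by
      rw [← mul_pow, ← inv_pow]
      congr 1
      have : (n:ℝ) ^ k = n * n ^ (k - 1) := by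
        rw [← pow_succ']; congr 1; omega
      rw [this, div_pow]
      field_simp
    rw [e]
    apply inv_anti₀ (by positivity)
    gcongr
  calc (k : ℝ) ^ (k - 1) / (4 * (n : ℝ) ^ k)
      = (((k : ℝ) ^ (k - 1) / (4 * (n : ℝ) ^ k)) ^ k) ^ ((1:ℝ) / k) := by
        rw [one_div, Real.pow_rpow_inv_natCast hL (by omega)]
    _ ≤ _ := Real.rpow_le_rpow (by positivity) hLk (by positivity)
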